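/- Let L be a positive integer and let u, v ∈ ℝⁿ be nonzero unit vectors all of whose squared entries are integer multiples of 1/L, with expanded supports Ū and V̄ in {1,...,n}×{1,...,L}. Let (h(ℓ))_{ℓ∈{1,...,n}×{1,...,L}} be independent random variables, each uniformly distributed on [0,1]. Let ℓ_U and ℓ_V be the (almost surely unique) minimizers of h over Ū and over V̄, with block indices j_U and j_V, and define Z = 1[h(ℓ_U) = h(ℓ_V)] · u[j_U]·v[j_V] / min(u[j_U]², v[j_V]²). Then E[Z²] = (∑_{j : u[j]≠0, v[j]≠0} max(u[j]², v[j]²)) / M, and consequently Var[Z] ≤ (∑_{j : u[j]≠0, v[j]≠0} max(u[j]², v[j]²)) / M, where M = ∑_{j=1}^{n} max(u[j]², v[j]²). -/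

import Mathlib

open MeasureTheory Finset
open scoped ENNReal

/-- The product measure on `J → ℝ` in which each coordinate is an independent
uniform random variable on `[0,1]`: a uniform hash family on `J`. -/
noncomputable def uniformHash (J : Type*) [Fintype J] : Measure (J → ℝ) :=
  Measure.pi fun _ : J => (volume : Measure ℝ).restrict (Set.Icc 0 1)

/-- A minimizer of `f` over the nonempty finite set `s` (the minimizer of a uniform
hash family over a nonempty set is almost surely unique). -/
noncomputable def argminOn {α : Type*} (s : Finset α) (hs : s.Nonempty) (f : α → ℝ) : α :=
  (s.exists_min_image f hs).choose

/-- The expanded support of a vector `u` with discretization parameter `L`: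
`Ū = {(i,k) ∈ {1,...,n} × {1,...,L} : k ≤ u[i]² ⬝ L}`, so that the block
`{i} × {1,...,L}` contributes exactly `u[i]² ⬝ L` elements when `u[i]²` is an
integer multiple of `1/L`.  (Here `Fin L` represents `{1,...,L}` via `k ↦ k+1`.) -/
noncomputable def expandedSupport {n : ℕ} (L : ℕ) (u : Fin n → ℝ) :
    Finset (Fin n × Fin L) :=
  Finset.univ.filter fun p => ((p.2 : ℕ) + 1 : ℝ) ≤ (u p.1) ^ 2 * L

/-- The weighted MinHash random variable
`Z = 1[h(ℓ_U) = h(ℓ_V)] ⬝ u[j_U] v[j_V] / min(u[j_U]², v[j_V]²)`, where `ℓ_U`, `ℓ_V` are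
the minimizers of the hash `h` over the expanded supports `Ū`, `V̄`, with block indices
`j_U = ℓ_U.1`, `j_V = ℓ_V.1`. -/
noncomputable def Zw {n L : ℕ} (u v : Fin n → ℝ)
    (hU : (expandedSupport L u).Nonempty) (hV : (expandedSupport L v).Nonempty)
    (h : Fin n × Fin L → ℝ) : ℝ :=
  (if h (argminOn (expandedSupport L u) hU h) = h (argminOn (expandedSupport L v) hV h)
      then (1 : ℝ) else 0) *
    (u (argminOn (expandedSupport L u) hU h).1 * v (argminOn (expandedSupport L v) hV h).1 /
      min ((u (argminOn (expandedSupport L u) hU h).1) ^ 2)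
        ((v (argminOn (expandedSupport L v) hV h).1) ^ 2))

/-!
Almost surely the hash has no ties. Then `Ū` and `V̄` have minimizers with equal hash values exactly
when the minimizer of `Ū ∪ V̄` lies in `Ū ∩ V̄`, and in that case all three minimizers coincide; so
`Z` is a function of the minimizer over the union alone. By exchangeability that minimizer is
uniform on `Ū ∪ V̄`, hence `E[Z²]` is an average over the union. Block `j` meets the union in
`L max(u[j]², v[j]²)` keys and the intersection in `L min(u[j]², v[j]²)` keys, and each of the
latter contributes `(u[j] v[j] / min(u[j]², v[j]²))² = max(u[j]², v[j]²) / min(u[j]², v[j]²)`.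
-/

section Argmin

variable {α : Type*} {s t : Finset α} {f : α → ℝ} {a : α}

theorem argminOn_mem (hs : s.Nonempty) (f : α → ℝ) : argminOn s hs f ∈ s :=
  (s.exists_min_image f hs).choose_spec.1

theorem isMinOn_argminOn (hs : s.Nonempty) (f : α → ℝ) : IsMinOn f s (argminOn s hs f) :=
  (s.exists_min_image f hs).choose_spec.2

theorem argminOn_eq_iff_isMinOn (hs : s.Nonempty) (hf : Set.InjOn f s) (ha : a ∈ s) :
    argminOn s hs f = a ↔ IsMinOn f s a where
  mp h := h ▸ isMinOn_argminOn hs f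
  mpr h := hf (argminOn_mem hs f) ha <|
    le_antisymm (isMinOn_argminOn hs f ha) (h (argminOn_mem hs f))

theorem argminOn_eq_of_subset (hs : s.Nonempty) (ht : t.Nonempty) (hf : Set.InjOn f t)
    (hst : s ⊆ t) (hmem : argminOn t ht f ∈ s) : argminOn s hs f = argminOn t ht f :=
  (argminOn_eq_iff_isMinOn hs (hf.mono hst) hmem).2 <| (isMinOn_argminOn ht f).on_subset hst

theorem comp_argminOn_eq_sum_indicator {E : Type*} [AddCommMonoid E] (hs : s.Nonempty)
    (F : α → E) (f : α → ℝ) :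
    F (argminOn s hs f) = ∑ l ∈ s, Set.indicator {g | argminOn s hs g = l} (fun _ => F l) f := by
  classical
  simp [Set.indicator_apply, argminOn_mem]

variable [DecidableEq α]

theorem apply_argminOn_eq_iff (hs : s.Nonempty) (ht : t.Nonempty)
    (hf : Set.InjOn f (s ∪ t : Finset α)) :
    f (argminOn s hs f) = f (argminOn t ht f) ↔ argminOn (s ∪ t) hs.inl f ∈ s ∩ t := by
  have of_mem_left := argminOn_eq_of_subset hs hs.inl hf subset_union_left
  have of_mem_right := argminOn_eq_of_subset ht hs.inl hf subset_union_right
  constructor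
  · intro heq
    have hst : argminOn s hs f = argminOn t ht f :=
      hf (subset_union_left (argminOn_mem hs f)) (subset_union_right (argminOn_mem ht f)) heq
    rcases mem_union.1 (argminOn_mem hs.inl f) with hl | hl
    · exact mem_inter.2 ⟨hl, of_mem_left hl ▸ hst ▸ argminOn_mem ht f⟩
    · exact mem_inter.2 ⟨of_mem_right hl ▸ hst ▸ argminOn_mem hs f, hl⟩
  · intro hl
    rw [of_mem_left (mem_inter.1 hl).1, of_mem_right (mem_inter.1 hl).2]

theorem ite_apply_argminOn_eq {β : Type*} [Zero β] (hs : s.Nonempty) (ht : t.Nonempty)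
    (hf : Set.InjOn f (s ∪ t : Finset α)) (F : α → α → β) :
    (if f (argminOn s hs f) = f (argminOn t ht f) then F (argminOn s hs f) (argminOn t ht f)
      else 0) =
    if argminOn (s ∪ t) hs.inl f ∈ s ∩ t
      then F (argminOn (s ∪ t) hs.inl f) (argminOn (s ∪ t) hs.inl f) else 0 := by
  refine ite_congr (propext (apply_argminOn_eq_iff hs ht hf)) (fun hl => ?_) fun _ => rfl
  rw [argminOn_eq_of_subset hs hs.inl hf subset_union_left (mem_inter.1 hl).1,
    argminOn_eq_of_subset ht hs.inl hf subset_union_right (mem_inter.1 hl).2]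

end Argmin

/-- A law of random hash functions for which MinHash works: it is invariant under relabelling
the keys and almost surely has no ties. Besides i.i.d. atomless hashes this covers hashing by a
uniformly random permutation. -/
structure IsExchangeableHash {J : Type*} (P : Measure (J → ℝ)) : Prop where
  measurePreserving_comp_perm (σ : Equiv.Perm J) : MeasurePreserving (fun h => h ∘ σ) P P
  ae_injective : ∀ᵐ h ∂P, Function.Injective h

section ProductHash

variable {J : Type*} [Fintype J]

section GeneralValues

variable {X : Type*} [MeasurableSpace X] (μ : Measure X)

theorem measurePreserving_pi_comp_perm [SigmaFinite μ] (σ : Equiv.Perm J) :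
    MeasurePreserving (fun h : J → X => h ∘ σ) (Measure.pi fun _ => μ) (Measure.pi fun _ => μ) :=
  measurePreserving_arrowCongr' (fun _ => μ) (fun _ => μ) σ.symm (MeasurableEquiv.refl X)
    fun _ => MeasurePreserving.id μ

variable [MeasurableEq X] [NullSingletonClass μ]

theorem prod_self_diagonal [SFinite μ] : μ.prod μ (Set.diagonal X) = 0 := by
  refine (Measure.measure_prod_null measurableSet_diagonal).2 (.of_forall fun x => ?_)
  have hslice : Prod.mk x ⁻¹' Set.diagonal X = {x} := by ext y; simp [eq_comm]
  simp [hslice]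

theorem ae_pi_apply_ne [IsProbabilityMeasure μ] {a b : J} (hab : a ≠ b) :
    ∀ᵐ h ∂(Measure.pi fun _ : J => μ), h a ≠ h b := by
  have hmap (c : J) : (Measure.pi fun _ : J => μ).map (fun h => h c) = μ :=
    (measurePreserving_eval (fun _ => μ) c).map_eq
  have hindep := (ProbabilityTheory.iIndepFun_pi (μ := fun _ : J => μ) (X := fun _ x => x)
    fun _ => aemeasurable_id').indepFun hab
  have hlaw : (Measure.pi fun _ : J => μ).map (fun h => (h a, h b)) = μ.prod μ := by
    simpa only [hmap] using hindep.map_prod_eq_prod_map_map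
      (measurable_pi_apply a).aemeasurable (measurable_pi_apply b).aemeasurable
  have hnull := prod_self_diagonal μ
  rw [← hlaw, Measure.map_apply (by fun_prop) measurableSet_diagonal] at hnull
  exact measure_eq_zero_iff_ae_notMem.1 hnull

end GeneralValues

theorem isExchangeableHash_pi (μ : Measure ℝ) [IsProbabilityMeasure μ] [NullSingletonClass μ] :
    IsExchangeableHash (Measure.pi fun _ : J => μ) where
  measurePreserving_comp_perm := measurePreserving_pi_comp_perm μ
  ae_injective := by
    have hne : ∀ᵐ h ∂(Measure.pi fun _ : J => μ), ∀ a b, a ≠ b → h a ≠ h b := by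
      simp only [ae_all_iff]
      exact fun a b hab => ae_pi_apply_ne μ hab
    filter_upwards [hne] with h hh a b
    exact not_imp_not.1 (hh a b)

end ProductHash

theorem measurableSet_isMinOn {J : Type*} (W : Finset J) (a : J) :
    MeasurableSet {h : J → ℝ | IsMinOn h W a} := by
  simp only [isMinOn_iff, SetLike.mem_coe, Set.ofPred_forall]
  exact W.measurableSet_biInter fun k _ =>
    measurableSet_le (measurable_pi_apply a) (measurable_pi_apply k)

namespace IsExchangeableHash

variable {J : Type*} {P : Measure (J → ℝ)} {W : Finset J} {a b : J}

theorem measure_isMinOn_eq (hP : IsExchangeableHash P) (ha : a ∈ W) (hb : b ∈ W) :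
    P {h | IsMinOn h W a} = P {h | IsMinOn h W b} := by
  classical
  have hswap : Set.MapsTo (Equiv.swap a b) W W :=
    (Equiv.swap_bijOn_self (iff_of_true ha hb)).mapsTo
  rw [← (hP.measurePreserving_comp_perm (Equiv.swap a b)).measure_preimage
    (measurableSet_isMinOn W b).nullMeasurableSet]
  congr 1 with h
  refine ⟨fun hmin => hmin.comp_mapsTo hswap (Equiv.swap_apply_right a b), fun hmin => ?_⟩
  simpa [Function.comp_assoc, ← Equiv.coe_trans] using
    IsMinOn.comp_mapsTo hmin hswap (Equiv.swap_apply_left a b)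

theorem argminOn_eq_ae_eq_isMinOn (hP : IsExchangeableHash P) (hW : W.Nonempty) (ha : a ∈ W) :
    {h | argminOn W hW h = a} =ᵐ[P] {h | IsMinOn h W a} := by
  filter_upwards [hP.ae_injective] with h hh
  exact propext (argminOn_eq_iff_isMinOn hW hh.injOn ha)

theorem nullMeasurableSet_argminOn_eq (hP : IsExchangeableHash P) (hW : W.Nonempty)
    (ha : a ∈ W) : NullMeasurableSet {h | argminOn W hW h = a} P :=
  (measurableSet_isMinOn W a).nullMeasurableSet.congr (hP.argminOn_eq_ae_eq_isMinOn hW ha).symm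

variable {E : Type*} [NormedAddCommGroup E]

theorem aestronglyMeasurable_comp_argminOn (hP : IsExchangeableHash P) (hW : W.Nonempty)
    (F : J → E) : AEStronglyMeasurable (fun h => F (argminOn W hW h)) P := by
  simp only [comp_argminOn_eq_sum_indicator hW F]
  exact W.aestronglyMeasurable_fun_sum fun l hl =>
    aestronglyMeasurable_const.indicator₀ (hP.nullMeasurableSet_argminOn_eq hW hl)

variable [NormedSpace ℝ E] [CompleteSpace E]

theorem integral_comp_argminOn_eq_sum [IsFiniteMeasure P] (hP : IsExchangeableHash P)
    (hW : W.Nonempty) (F : J → E) :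
    ∫ h, F (argminOn W hW h) ∂P = ∑ l ∈ W, P.real {h | argminOn W hW h = l} • F l := by
  simp only [comp_argminOn_eq_sum_indicator hW F]
  rw [integral_finsetSum _ fun l hl => (integrable_const (F l)).indicator₀
    (hP.nullMeasurableSet_argminOn_eq hW hl)]
  refine sum_congr rfl fun l hl => ?_
  rw [integral_indicator₀ (hP.nullMeasurableSet_argminOn_eq hW hl), setIntegral_const]

variable [IsProbabilityMeasure P]

theorem measureReal_argminOn_eq (hP : IsExchangeableHash P) (hW : W.Nonempty) (ha : a ∈ W) :
    P.real {h | argminOn W hW h = a} = (#W : ℝ)⁻¹ := by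
  have hconst : ∀ l ∈ W, P.real {h | argminOn W hW h = l} = P.real {h | argminOn W hW h = a} :=
    fun l hl => by
      simp only [measureReal_congr (hP.argminOn_eq_ae_eq_isMinOn hW hl),
        measureReal_congr (hP.argminOn_eq_ae_eq_isMinOn hW ha), measureReal_def,
        hP.measure_isMinOn_eq hl ha]
  have htotal : 1 = #W * P.real {h | argminOn W hW h = a} := by
    simpa [sum_congr rfl hconst] using hP.integral_comp_argminOn_eq_sum hW fun _ => (1 : ℝ)
  exact eq_inv_of_mul_eq_one_right htotal.symm

theorem integral_comp_argminOn (hP : IsExchangeableHash P) (hW : W.Nonempty) (F : J → E) :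
    ∫ h, F (argminOn W hW h) ∂P = (#W : ℝ)⁻¹ • ∑ l ∈ W, F l := by
  rw [hP.integral_comp_argminOn_eq_sum hW, smul_sum]
  exact sum_congr rfl fun l hl => by rw [hP.measureReal_argminOn_eq hW hl]

end IsExchangeableHash

section ExpandedSupport

variable {n L : ℕ} {u v w : Fin n → ℝ}

theorem card_filter_val_add_one_le (L : ℕ) (x : ℝ) :
    #{k : Fin L | ((k : ℕ) + 1 : ℝ) ≤ x} = min L ⌊x⌋₊ := by
  rw [← Fin.card_filter_val_lt]
  congr! 2 with k
  rw [← Nat.succ_le_iff, Nat.le_floor_iff' (Nat.succ_ne_zero _)]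
  push_cast
  rfl

/-- `x` is an admissible entry at resolution `L`: its square lies in `[0, 1]` and is a multiple of
`1 / L`, so that it is represented exactly by a subset of a block of length `L`. -/
def IsGridEntry (L : ℕ) (x : ℝ) : Prop :=
  x ^ 2 ≤ 1 ∧ ∃ k : ℤ, x ^ 2 = (k : ℝ) / L

theorem IsGridEntry.abs {x : ℝ} (hx : IsGridEntry L x) : IsGridEntry L |x| := by
  simpa only [IsGridEntry, sq_abs] using hx

theorem IsGridEntry.exists_sq_mul_eq {x : ℝ} (hx : IsGridEntry L x) :
    ∃ m ≤ L, x ^ 2 * L = m := by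
  obtain ⟨hx1, k, hk⟩ := hx
  rcases L.eq_zero_or_pos with rfl | hL
  · exact ⟨0, le_rfl, by simp⟩
  have hLpos : (0 : ℝ) < L := Nat.cast_pos.2 hL
  have hxk : x ^ 2 * L = k := by rw [hk, div_mul_cancel₀ _ hLpos.ne']
  have hk0 : 0 ≤ k := by exact_mod_cast hxk ▸ mul_nonneg (sq_nonneg x) hLpos.le
  lift k to ℕ using hk0
  rw [Int.cast_natCast] at hxk
  refine ⟨k, ?_, hxk⟩
  exact_mod_cast hxk ▸ mul_le_of_le_one_left hLpos.le hx1

theorem IsGridEntry.card_block {x : ℝ} (hx : IsGridEntry L x) :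
    (#{k : Fin L | ((k : ℕ) + 1 : ℝ) ≤ x ^ 2 * L} : ℝ) = x ^ 2 * L := by
  obtain ⟨m, hmL, hm⟩ := hx.exists_sq_mul_eq
  rw [hm, card_filter_val_add_one_le, Nat.floor_natCast, min_eq_right hmL]

theorem sum_expandedSupport (hw : ∀ i, IsGridEntry L (w i)) (f : Fin n → ℝ) :
    ∑ p ∈ expandedSupport L w, f p.1 = L * ∑ i, f i * w i ^ 2 := by
  rw [expandedSupport, sum_filter, Fintype.sum_prod_type, mul_sum]
  refine sum_congr rfl fun i _ => ?_
  have hblock : ∑ k : Fin L, (if ((k : ℕ) + 1 : ℝ) ≤ w i ^ 2 * L then f i else 0) =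
      w i ^ 2 * L * f i := by
    rw [← sum_filter, sum_const, nsmul_eq_mul, (hw i).card_block]
  rw [hblock]
  ring

theorem sq_min_abs_abs (x y : ℝ) : min |x| |y| ^ 2 = min (x ^ 2) (y ^ 2) := by
  simpa using (pow_left_monotoneOn (n := 2)).map_min
    (Set.mem_ofPred.2 (abs_nonneg x)) (Set.mem_ofPred.2 (abs_nonneg y))

theorem sq_max_abs_abs (x y : ℝ) : max |x| |y| ^ 2 = max (x ^ 2) (y ^ 2) := by
  simpa using (pow_left_monotoneOn (n := 2)).map_max
    (Set.mem_ofPred.2 (abs_nonneg x)) (Set.mem_ofPred.2 (abs_nonneg y))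

theorem expandedSupport_min_abs (L : ℕ) (u v : Fin n → ℝ) :
    expandedSupport L (fun i => min |u i| |v i|) = expandedSupport L u ∩ expandedSupport L v := by
  ext p
  simp [expandedSupport, sq_min_abs_abs, min_mul_of_nonneg]

theorem expandedSupport_max_abs (L : ℕ) (u v : Fin n → ℝ) :
    expandedSupport L (fun i => max |u i| |v i|) = expandedSupport L u ∪ expandedSupport L v := by
  ext p
  simp [expandedSupport, sq_max_abs_abs, max_mul_of_nonneg]

theorem sum_expandedSupport_inter (hu : ∀ i, IsGridEntry L (u i)) (hv : ∀ i, IsGridEntry L (v i))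
    (f : Fin n → ℝ) :
    ∑ p ∈ expandedSupport L u ∩ expandedSupport L v, f p.1 =
      L * ∑ i, f i * min (u i ^ 2) (v i ^ 2) := by
  rw [← expandedSupport_min_abs,
    sum_expandedSupport fun i => min_rec' (IsGridEntry L) (hu i).abs (hv i).abs]
  simp only [sq_min_abs_abs]

theorem card_expandedSupport_union (hu : ∀ i, IsGridEntry L (u i))
    (hv : ∀ i, IsGridEntry L (v i)) :
    (#(expandedSupport L u ∪ expandedSupport L v) : ℝ) = L * ∑ i, max (u i ^ 2) (v i ^ 2) := by
  have hsum := sum_expandedSupport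
    (fun i => max_rec' (IsGridEntry L) (hu i).abs (hv i).abs) fun _ => 1
  simpa [expandedSupport_max_abs, sq_max_abs_abs] using hsum

end ExpandedSupport

theorem sq_mul_div_min_mul_min (x y : ℝ) :
    (x * y / min (x ^ 2) (y ^ 2)) ^ 2 * min (x ^ 2) (y ^ 2) =
      if x ≠ 0 ∧ y ≠ 0 then max (x ^ 2) (y ^ 2) else 0 := by
  split_ifs with hxy
  · have hmin : min (x ^ 2) (y ^ 2) ≠ 0 :=
      (lt_min (sq_pos_of_ne_zero hxy.1) (sq_pos_of_ne_zero hxy.2)).ne'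
    rw [div_pow, div_mul_eq_mul_div, div_eq_iff (pow_ne_zero 2 hmin), mul_pow,
      ← min_mul_max (x ^ 2) (y ^ 2)]
    ring
  · have hmul : x * y = 0 := by simpa only [← mul_ne_zero_iff, not_not] using hxy
    simp [hmul]

/-- The value of `Zw u v` on a hash that is minimized over `Ū ∪ V̄` at the key `p`. -/
noncomputable def minHashValue {n L : ℕ} (u v : Fin n → ℝ) (p : Fin n × Fin L) : ℝ :=
  if p ∈ expandedSupport L u ∩ expandedSupport L v
    then u p.1 * v p.1 / min (u p.1 ^ 2) (v p.1 ^ 2) else 0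

section WeightedMinHash

variable {n L : ℕ} {P : Measure (Fin n × Fin L → ℝ)} {u v : Fin n → ℝ}

theorem Zw_ae_eq_minHashValue (hP : IsExchangeableHash P)
    (hU : (expandedSupport L u).Nonempty) (hV : (expandedSupport L v).Nonempty) :
    Zw u v hU hV =ᵐ[P] fun h =>
      minHashValue u v (argminOn (expandedSupport L u ∪ expandedSupport L v) hU.inl h) := by
  filter_upwards [hP.ae_injective] with h hh
  rw [Zw, ite_mul, one_mul, zero_mul]
  exact ite_apply_argminOn_eq hU hV hh.injOn
    fun k l => u k.1 * v l.1 / min (u k.1 ^ 2) (v l.1 ^ 2)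

theorem sum_sq_minHashValue (hu : ∀ i, IsGridEntry L (u i)) (hv : ∀ i, IsGridEntry L (v i)) :
    ∑ p ∈ expandedSupport L u ∪ expandedSupport L v, minHashValue u v p ^ 2 =
      L * ∑ j with u j ≠ 0 ∧ v j ≠ 0, max (u j ^ 2) (v j ^ 2) := by
  have hinter : expandedSupport L u ∩ expandedSupport L v ⊆
      expandedSupport L u ∪ expandedSupport L v := inter_subset_left.trans subset_union_left
  simp only [minHashValue, ite_pow, zero_pow two_ne_zero]
  rw [sum_ite_mem, inter_eq_right.2 hinter,
    sum_expandedSupport_inter hu hv fun j => (u j * v j / min (u j ^ 2) (v j ^ 2)) ^ 2]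
  simp only [sq_mul_div_min_mul_min, sum_filter]

theorem integral_sq_Zw [IsProbabilityMeasure P] (hP : IsExchangeableHash P)
    (hu : ∀ i, IsGridEntry L (u i)) (hv : ∀ i, IsGridEntry L (v i))
    (hU : (expandedSupport L u).Nonempty) (hV : (expandedSupport L v).Nonempty) :
    ∫ h, Zw u v hU hV h ^ 2 ∂P =
      (∑ j with u j ≠ 0 ∧ v j ≠ 0, max (u j ^ 2) (v j ^ 2)) / ∑ j, max (u j ^ 2) (v j ^ 2) := by
  have hL : (L : ℝ) ≠ 0 := Nat.cast_ne_zero.2 hU.choose.2.pos.ne'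
  calc ∫ h, Zw u v hU hV h ^ 2 ∂P
    _ = ∫ h, minHashValue u v
          (argminOn (expandedSupport L u ∪ expandedSupport L v) hU.inl h) ^ 2 ∂P :=
        integral_congr_ae ((Zw_ae_eq_minHashValue hP hU hV).pow_const 2)
    _ = (#(expandedSupport L u ∪ expandedSupport L v) : ℝ)⁻¹ *
          ∑ p ∈ expandedSupport L u ∪ expandedSupport L v, minHashValue u v p ^ 2 :=
        hP.integral_comp_argminOn hU.inl fun p => minHashValue u v p ^ 2
    _ = _ := by
        rw [card_expandedSupport_union hu hv, sum_sq_minHashValue hu hv, inv_mul_eq_div,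
          mul_div_mul_left _ _ hL]

theorem variance_Zw_le_integral_sq [IsProbabilityMeasure P] (hP : IsExchangeableHash P)
    (hU : (expandedSupport L u).Nonempty) (hV : (expandedSupport L v).Nonempty) :
    ProbabilityTheory.variance (Zw u v hU hV) P ≤ ∫ h, Zw u v hU hV h ^ 2 ∂P :=
  ProbabilityTheory.variance_le_expectation_sq <|
    (hP.aestronglyMeasurable_comp_argminOn hU.inl (minHashValue u v)).congr
      (Zw_ae_eq_minHashValue hP hU hV).symm

theorem weighted_minhash_second_moment_general [IsProbabilityMeasure P]
    (hP : IsExchangeableHash P)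
    (hu : ∀ i, IsGridEntry L (u i)) (hv : ∀ i, IsGridEntry L (v i))
    (hU : (expandedSupport L u).Nonempty) (hV : (expandedSupport L v).Nonempty) :
    ∫ h, Zw u v hU hV h ^ 2 ∂P =
        (∑ j with u j ≠ 0 ∧ v j ≠ 0, max (u j ^ 2) (v j ^ 2)) / ∑ j, max (u j ^ 2) (v j ^ 2) ∧
      ProbabilityTheory.variance (Zw u v hU hV) P ≤
        (∑ j with u j ≠ 0 ∧ v j ≠ 0, max (u j ^ 2) (v j ^ 2)) / ∑ j, max (u j ^ 2) (v j ^ 2) :=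
  have hint := integral_sq_Zw hP hu hv hU hV
  ⟨hint, hint ▸ variance_Zw_le_integral_sq hP hU hV⟩

theorem isGridEntry_of_sum_sq_eq_one (h1 : ∑ i, u i ^ 2 = 1)
    (hu : ∀ i, ∃ k : ℤ, u i ^ 2 = (k : ℝ) / L) (i : Fin n) : IsGridEntry L (u i) :=
  ⟨h1 ▸ single_le_sum (f := fun i => u i ^ 2) (fun j _ => sq_nonneg (u j)) (mem_univ i), hu i⟩

end WeightedMinHash

instance isProbabilityMeasure_restrict_Icc_zero_one :
    IsProbabilityMeasure ((volume : Measure ℝ).restrict (Set.Icc 0 1)) := ⟨by simp⟩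

instance isProbabilityMeasure_uniformHash (J : Type*) [Fintype J] :
    IsProbabilityMeasure (uniformHash J) :=
  inferInstanceAs (IsProbabilityMeasure (Measure.pi _))

theorem isExchangeableHash_uniformHash (J : Type*) [Fintype J] :
    IsExchangeableHash (uniformHash J) :=
  isExchangeableHash_pi _

/-- For nonzero unit vectors `u, v` with squared entries integer multiples of `1/L` and a
uniform hash family on `{1,...,n} × {1,...,L}`, the weighted MinHash random variable `Z`
satisfies `E[Z²] = (∑_{j : u j ≠ 0, v j ≠ 0} max(u[j]², v[j]²)) / M` and consequently
`Var[Z] ≤ (∑_{j : u j ≠ 0, v j ≠ 0} max(u[j]², v[j]²)) / M`,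
where `M = ∑ⱼ max(u[j]², v[j]²)`. -/
theorem weighted_minhash_second_moment {n : ℕ} (L : ℕ) (hL : 0 < L)
    (u v : Fin n → ℝ) (hu0 : u ≠ 0) (hv0 : v ≠ 0)
    (hu1 : ∑ i, (u i) ^ 2 = 1) (hv1 : ∑ i, (v i) ^ 2 = 1)
    (hu : ∀ i, ∃ k : ℤ, (u i) ^ 2 = (k : ℝ) / L)
    (hv : ∀ i, ∃ k : ℤ, (v i) ^ 2 = (k : ℝ) / L)
    (hU : (expandedSupport L u).Nonempty) (hV : (expandedSupport L v).Nonempty) :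
    (∫ h, (Zw u v hU hV h) ^ 2 ∂(uniformHash (Fin n × Fin L))
        = (∑ j ∈ Finset.univ.filter (fun j => u j ≠ 0 ∧ v j ≠ 0),
              max ((u j) ^ 2) ((v j) ^ 2)) / (∑ j, max ((u j) ^ 2) ((v j) ^ 2)))
    ∧ ProbabilityTheory.variance (Zw u v hU hV) (uniformHash (Fin n × Fin L))
        ≤ (∑ j ∈ Finset.univ.filter (fun j => u j ≠ 0 ∧ v j ≠ 0),
              max ((u j) ^ 2) ((v j) ^ 2)) / (∑ j, max ((u j) ^ 2) ((v j) ^ 2)) := by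
  exact weighted_minhash_second_moment_general (isExchangeableHash_uniformHash _)
    (isGridEntry_of_sum_sq_eq_one hu1 hu) (isGridEntry_of_sum_sq_eq_one hv1 hv) hU hV
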